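/- arXiv:2605.08661 — 6 statements merged into one kernel-verified Lean document; each statement's English description precedes it below -/
import Mathlib

section
/- Let n be a positive integer and let A, B, C, D be n×n matrices with entries in {-1, 1} such that AAᵀ + BBᵀ + CCᵀ + DDᵀ = 4n·I and such that XYᵀ = YXᵀ for all X, Y ∈ {A, B, C, D}. Then the 4n×4n block matrix W = [[A, B, C, D], [-B, A, D, -C], [-C, -D, A, B], [-D, C, -B, A]] satisfies WWᵀ = 4n·I, i.e., W is a Hadamard matrix of order 4n. -/
open Matrix

/-!
Write `W = [[P, Q], [-Q, P]]` with `P = [[A, B], [-B, A]]` and `Q = [[C, D], [D, -C]]`. When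
`X * Yᵀ = Y * Xᵀ`, the cross terms in the Gram matrices of `[[X, Y], [-Y, X]]` and
`[[X, Y], [Y, -X]]` cancel, and both Gram matrices are block diagonal with blocks
`X * Xᵀ + Y * Yᵀ`. This applies to `P`, to `Q`, and then to `W`, because `P * Qᵀ = Q * Pᵀ` is
inherited from `A`, `B`, `C`, `D`.
-/

section EntriesInSet

variable {l m n o α : Type*} {S : Set α}

theorem fromBlocks_mem_matrix {A : Matrix n l α} {B : Matrix n m α} {C : Matrix o l α}
    {D : Matrix o m α} (hA : A ∈ S.matrix) (hB : B ∈ S.matrix) (hC : C ∈ S.matrix)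
    (hD : D ∈ S.matrix) : fromBlocks A B C D ∈ S.matrix := by
  rintro (i | i) (j | j)
  exacts [hA i j, hB i j, hC i j, hD i j]

theorem neg_mem_matrix [Neg α] (hS : ∀ x ∈ S, -x ∈ S) {A : Matrix m n α} (hA : A ∈ S.matrix) :
    -A ∈ S.matrix :=
  fun i j ↦ hS _ (hA i j)

end EntriesInSet

theorem fromBlocks_smul_one {m n R : Type*} [DecidableEq m] [DecidableEq n] [NonAssocSemiring R]
    (c : R) :
    fromBlocks (c • 1 : Matrix m m R) 0 0 (c • 1 : Matrix n n R) = c • 1 := by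
  simp only [smul_one_eq_diagonal, fromBlocks_diagonal, Sum.elim_lam_const_lam_const]

section Doubling

variable {m n R : Type*} [NonUnitalNonAssocRing R] {S : Set R}

/-- The array `[[X, Y], [-Y, X]]`, which turns a pair of amicable matrices into a matrix with block
diagonal Gram matrix; the Williamson array is an iterated instance. -/
def skewDouble (X Y : Matrix m n R) : Matrix (m ⊕ m) (n ⊕ n) R :=
  fromBlocks X Y (-Y) X

/-- The array `[[X, Y], [Y, -X]]`, the symmetric counterpart of `skewDouble`; it supplies the
off-diagonal half of the Williamson array. -/
def symmDouble (X Y : Matrix m n R) : Matrix (m ⊕ m) (n ⊕ n) R :=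
  fromBlocks X Y Y (-X)

/-- The Williamson array of four matrices, with its `4 × 4` blocks grouped as a `2 × 2` array of
`2 × 2` arrays. -/
def williamsonArray (A B C D : Matrix m n R) :
    Matrix ((m ⊕ m) ⊕ (m ⊕ m)) ((n ⊕ n) ⊕ (n ⊕ n)) R :=
  fromBlocks
    (fromBlocks A B (-B) A) (fromBlocks C D D (-C))
    (fromBlocks (-C) (-D) (-D) C) (fromBlocks A B (-B) A)

theorem williamsonArray_eq_skewDouble (A B C D : Matrix m n R) :
    williamsonArray A B C D = skewDouble (skewDouble A B) (symmDouble C D) := by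
  simp only [williamsonArray, skewDouble, symmDouble, fromBlocks_neg, neg_neg]

theorem skewDouble_mem_matrix (hS : ∀ x ∈ S, -x ∈ S) {X Y : Matrix m n R}
    (hX : X ∈ S.matrix) (hY : Y ∈ S.matrix) : skewDouble X Y ∈ S.matrix :=
  fromBlocks_mem_matrix hX hY (neg_mem_matrix hS hY) hX

theorem symmDouble_mem_matrix (hS : ∀ x ∈ S, -x ∈ S) {X Y : Matrix m n R}
    (hX : X ∈ S.matrix) (hY : Y ∈ S.matrix) : symmDouble X Y ∈ S.matrix :=
  fromBlocks_mem_matrix hX hY hY (neg_mem_matrix hS hX)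

theorem williamsonArray_mem_matrix (hS : ∀ x ∈ S, -x ∈ S) {A B C D : Matrix m n R}
    (hA : A ∈ S.matrix) (hB : B ∈ S.matrix) (hC : C ∈ S.matrix) (hD : D ∈ S.matrix) :
    williamsonArray A B C D ∈ S.matrix := by
  rw [williamsonArray_eq_skewDouble]
  exact skewDouble_mem_matrix hS (skewDouble_mem_matrix hS hA hB) (symmDouble_mem_matrix hS hC hD)

variable [Fintype n]

/-- Amicability of two matrices of the same shape: over a commutative ring, this says that
`X * Yᵀ` is symmetric. -/
def Amicable (X Y : Matrix m n R) : Prop :=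
  X * Yᵀ = Y * Xᵀ

theorem skewDouble_mul_transpose {X Y : Matrix m n R} (h : Amicable X Y) :
    skewDouble X Y * (skewDouble X Y)ᵀ =
      fromBlocks (X * Xᵀ + Y * Yᵀ) 0 0 (X * Xᵀ + Y * Yᵀ) := by
  rw [Amicable] at h
  simp only [skewDouble, fromBlocks_transpose, fromBlocks_multiply, transpose_neg,
    Matrix.neg_mul, Matrix.mul_neg, neg_neg, h]
  congr 1 <;> abel

theorem symmDouble_mul_transpose {X Y : Matrix m n R} (h : Amicable X Y) :
    symmDouble X Y * (symmDouble X Y)ᵀ =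
      fromBlocks (X * Xᵀ + Y * Yᵀ) 0 0 (X * Xᵀ + Y * Yᵀ) := by
  rw [Amicable] at h
  simp only [symmDouble, fromBlocks_transpose, fromBlocks_multiply, transpose_neg,
    Matrix.neg_mul, Matrix.mul_neg, neg_neg, h]
  congr 1 <;> abel

theorem amicable_skewDouble_symmDouble {A B C D : Matrix m n R} (hAC : Amicable A C)
    (hAD : Amicable A D) (hBC : Amicable B C) (hBD : Amicable B D) :
    Amicable (skewDouble A B) (symmDouble C D) := by
  simp only [Amicable] at hAC hAD hBC hBD
  simp only [Amicable, skewDouble, symmDouble, fromBlocks_transpose, fromBlocks_multiply,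
    transpose_neg, Matrix.neg_mul, Matrix.mul_neg, hAC, hAD, hBC, hBD]
  congr 1 <;> abel

theorem williamsonArray_mul_transpose {A B C D : Matrix m n R} {G : Matrix m m R}
    (hG : A * Aᵀ + B * Bᵀ + C * Cᵀ + D * Dᵀ = G)
    (h : ∀ X ∈ ({A, B, C, D} : Set (Matrix m n R)),
      ∀ Y ∈ ({A, B, C, D} : Set (Matrix m n R)), Amicable X Y) :
    williamsonArray A B C D * (williamsonArray A B C D)ᵀ =
      fromBlocks (fromBlocks G 0 0 G) 0 0 (fromBlocks G 0 0 G) := by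
  have hAB : Amicable A B := h A (by simp) B (by simp)
  have hCD : Amicable C D := h C (by simp) D (by simp)
  have hPQ : Amicable (skewDouble A B) (symmDouble C D) :=
    amicable_skewDouble_symmDouble (h A (by simp) C (by simp)) (h A (by simp) D (by simp))
      (h B (by simp) C (by simp)) (h B (by simp) D (by simp))
  rw [williamsonArray_eq_skewDouble, skewDouble_mul_transpose hPQ, skewDouble_mul_transpose hAB,
    symmDouble_mul_transpose hCD, fromBlocks_add, add_zero, ← add_assoc, hG]

end Doubling

/-- Besides Hadamard matrices (`S = {1, -1}`), this covers weighing matrices (`S = {0, 1, -1}`). -/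
theorem williamson_array_hadamard_general {m n R : Type*} [DecidableEq m] [Fintype n]
    [NonAssocRing R] {S : Set R} (hS : ∀ x ∈ S, -x ∈ S) (c : R) (A B C D : Matrix m n R)
    (hmem : ∀ X ∈ ({A, B, C, D} : Set (Matrix m n R)), X ∈ S.matrix)
    (hadd : A * Aᵀ + B * Bᵀ + C * Cᵀ + D * Dᵀ = c • 1)
    (hami : ∀ X ∈ ({A, B, C, D} : Set (Matrix m n R)),
      ∀ Y ∈ ({A, B, C, D} : Set (Matrix m n R)), Amicable X Y) :
    williamsonArray A B C D ∈ S.matrix ∧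
      williamsonArray A B C D * (williamsonArray A B C D)ᵀ = c • 1 := by
  constructor
  · exact williamsonArray_mem_matrix hS (hmem A (by simp)) (hmem B (by simp)) (hmem C (by simp))
      (hmem D (by simp))
  · rw [williamsonArray_mul_transpose hadd hami, fromBlocks_smul_one, fromBlocks_smul_one]

/-- If four `n × n` `(-1,1)`-matrices `A, B, C, D` satisfy
`AAᵀ + BBᵀ + CCᵀ + DDᵀ = 4n·I` and `XYᵀ = YXᵀ` for all `X, Y ∈ {A, B, C, D}`,
then the Williamson array `W` is a Hadamard matrix of order `4n`. -/
theorem williamson_array_hadamard (n : ℕ) (hn : 0 < n)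
    (A B C D : Matrix (Fin n) (Fin n) ℝ)
    (hpm : ∀ X ∈ ({A, B, C, D} : Set (Matrix (Fin n) (Fin n) ℝ)),
      ∀ i j, X i j = 1 ∨ X i j = -1)
    (hadd : A * Aᵀ + B * Bᵀ + C * Cᵀ + D * Dᵀ = (4 * n : ℝ) • 1)
    (hami : ∀ X ∈ ({A, B, C, D} : Set (Matrix (Fin n) (Fin n) ℝ)),
      ∀ Y ∈ ({A, B, C, D} : Set (Matrix (Fin n) (Fin n) ℝ)), X * Yᵀ = Y * Xᵀ) :
    let W := Matrix.fromBlocks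
      (Matrix.fromBlocks A B (-B) A) (Matrix.fromBlocks C D D (-C))
      (Matrix.fromBlocks (-C) (-D) (-D) C) (Matrix.fromBlocks A B (-B) A)
    (∀ i j, W i j = 1 ∨ W i j = -1) ∧ W * Wᵀ = (4 * n : ℝ) • 1 := by
  have neg_mem : ∀ x ∈ ({1, -1} : Set ℝ), -x ∈ ({1, -1} : Set ℝ) := by
    rintro x (rfl | rfl) <;> simp
  exact williamson_array_hadamard_general neg_mem (4 * n) A B C D hpm hadd hami
end

section
/- Let n be a positive integer, let A be an n×n symmetric circulant matrix and let B be an n×n back circulant matrix (over a commutative ring). Then AB = BA. -/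
open Matrix

/-- `X` is circulant: `x_{ij} = x_{0, j-i}` with indices mod `n`. -/
def IsCirculant {n : ℕ} {α : Type*} (X : Matrix (ZMod n) (ZMod n) α) : Prop :=
  ∀ i j, X i j = X 0 (j - i)

/-- `X` is back circulant: `x_{ij} = x_{0, i+j}` with indices mod `n`. -/
def IsBackCirculant {n : ℕ} {α : Type*} (X : Matrix (ZMod n) (ZMod n) α) : Prop :=
  ∀ i j, X i j = X 0 (i + j)

/-!
The product of a circulant matrix `A` and a back circulant matrix `B` is again back circulant.
Back circulant matrices are symmetric, so `A * B = (A * B)ᵀ = Bᵀ * Aᵀ = B * Aᵀ`, and `Aᵀ = A` when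
`A` is symmetric.
-/

section BackCirculant

variable {G α : Type*}

/-- The back circulant matrix with entries `w (i + j)`, the analogue for sums of indices of
`Matrix.circulant`. While `Matrix.circulant v` has `v` as its column of index `0`, here `w` is both
the row and the column of index `0`. -/
def backCirculant [Add G] (w : G → α) : Matrix G G α :=
  of fun i j => w (i + j)

theorem backCirculant_apply [Add G] (w : G → α) (i j : G) : backCirculant w i j = w (i + j) :=
  rfl

theorem backCirculant_isSymm [AddCommMagma G] (w : G → α) : (backCirculant w).IsSymm :=
  IsSymm.ext fun i j => by rw [backCirculant_apply, backCirculant_apply, add_comm]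

theorem circulant_mul_backCirculant [AddGroup G] [Fintype G] [Mul α] [AddCommMonoid α]
    (v w : G → α) :
    circulant v * backCirculant w = backCirculant fun s => ∑ d, v d * w (-d + s) := by
  ext i j
  simp only [Matrix.mul_apply, circulant_apply, backCirculant_apply]
  refine Fintype.sum_equiv (Equiv.subLeft i) _ _ fun k => ?_
  have index_eq : -(i - k) + (i + j) = k + j := by
    rw [neg_sub, ← add_assoc, sub_add_cancel]
  rw [Equiv.subLeft_apply, index_eq]

variable [AddCommGroup G] [Fintype G] [CommMagma α] [AddCommMonoid α]

theorem circulant_mul_backCirculant_eq_backCirculant_mul_transpose (v w : G → α) :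
    circulant v * backCirculant w = backCirculant w * (circulant v)ᵀ := by
  have product_isSymm : (circulant v * backCirculant w).IsSymm := by
    rw [circulant_mul_backCirculant]
    exact backCirculant_isSymm _
  calc
    circulant v * backCirculant w = (circulant v * backCirculant w)ᵀ := product_isSymm.eq.symm
    _ = (backCirculant w)ᵀ * (circulant v)ᵀ := transpose_mul _ _
    _ = backCirculant w * (circulant v)ᵀ := by rw [(backCirculant_isSymm w).eq]

theorem symm_circulant_commutes_backCirculant_general {v : G → α} (hv : (circulant v).IsSymm)
    (w : G → α) : circulant v * backCirculant w = backCirculant w * circulant v := by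
  rw [circulant_mul_backCirculant_eq_backCirculant_mul_transpose, hv.eq]

end BackCirculant

section ZModIndices

variable {n : ℕ} {α : Type*} {X : Matrix (ZMod n) (ZMod n) α}

theorem IsCirculant.exists_eq_circulant (hX : IsCirculant X) : ∃ v, X = circulant v :=
  ⟨fun k => X 0 (-k), Matrix.ext fun i j => by rw [hX i j, circulant_apply, neg_sub]⟩

theorem IsBackCirculant.exists_eq_backCirculant (hX : IsBackCirculant X) :
    ∃ w, X = backCirculant w :=
  ⟨X 0, Matrix.ext hX⟩

end ZModIndices

/-- A symmetric circulant matrix commutes with every back circulant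
matrix (over a commutative ring). -/
theorem symm_circulant_commutes_backCirculant (n : ℕ) [NeZero n] {α : Type*} [CommRing α]
    (A B : Matrix (ZMod n) (ZMod n) α)
    (hA : IsCirculant A) (hAsymm : A.IsSymm) (hB : IsBackCirculant B) :
    A * B = B * A := by
  obtain ⟨v, rfl⟩ := hA.exists_eq_circulant
  obtain ⟨w, rfl⟩ := hB.exists_eq_backCirculant
  exact symm_circulant_commutes_backCirculant_general hAsymm w
end

section
/- Let A, B, C, D be near Williamson matrices of order n, and let R denote the n×n back circulant (0,1)-matrix whose first row is (0, …, 0, 1). Then the four (-1,1)-matrices AR, B, C, D satisfy XYᵀ = YXᵀ for all X, Y ∈ {AR, B, C, D}, and (AR)(AR)ᵀ + BBᵀ + CCᵀ + DDᵀ = 4n·I. -/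
open Matrix

/-- `X` is a `(-1,1)`-matrix. -/
def IsPM1 {n : ℕ} (X : Matrix (ZMod n) (ZMod n) ℝ) : Prop :=
  ∀ i j, X i j = 1 ∨ X i j = -1

/-- `A, B, C, D` are near Williamson matrices of order `n`: four `(-1,1)`-matrices,
all circulant, with `B, C, D` symmetric, satisfying `AAᵀ + BBᵀ + CCᵀ + DDᵀ = 4n·I`. -/
def IsNearWilliamson (n : ℕ) [NeZero n] (A B C D : Matrix (ZMod n) (ZMod n) ℝ) : Prop :=
  IsPM1 A ∧ IsPM1 B ∧ IsPM1 C ∧ IsPM1 D ∧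
  IsCirculant A ∧ IsCirculant B ∧ IsCirculant C ∧ IsCirculant D ∧
  B.IsSymm ∧ C.IsSymm ∧ D.IsSymm ∧
  A * Aᵀ + B * Bᵀ + C * Cᵀ + D * Dᵀ = (4 * n : ℝ) • 1

/-- The back circulant `(0,1)`-matrix `R` whose first row is `(0, …, 0, 1)`. -/
def Rmat (n : ℕ) : Matrix (ZMod n) (ZMod n) ℝ :=
  Matrix.of fun i j => if i + j = -1 then 1 else 0

/-!
`R` is the permutation matrix of the reflection `i ↦ -1 - i` of `ZMod n`, hence a symmetric
involution, and it intertwines every circulant `X` with its transpose: `X R = R Xᵀ`. Therefore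
`A R` is symmetric and commutes with every symmetric circulant, while `R Rᵀ = 1` leaves the Gram
matrix of `A` unchanged. For symmetric `X` and `Y`, `X Yᵀ = Y Xᵀ` just says that they commute.
-/

namespace IsCirculant

variable {n : ℕ} {α : Type*} {X Y : Matrix (ZMod n) (ZMod n) α}

-- Mathlib's `circulant` is generated by its first column, whence the sign.
theorem eq_circulant (hX : IsCirculant X) : X = circulant fun i => X 0 (-i) := by
  ext i j
  rw [circulant_apply, neg_sub, hX i j]

theorem commute [NeZero n] [CommMagma α] [AddCommMonoid α]
    (hX : IsCirculant X) (hY : IsCirculant Y) : Commute X Y := by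
  rw [hX.eq_circulant, hY.eq_circulant]
  exact circulant_mul_comm _ _

end IsCirculant

theorem mul_transpose_eq_of_isSymm_of_pairwise_commute {m α : Type*} [Fintype m]
    [Mul α] [AddCommMonoid α] {S : Set (Matrix m m α)}
    (hsymm : ∀ X ∈ S, X.IsSymm) (hcomm : S.Pairwise Commute) :
    ∀ X ∈ S, ∀ Y ∈ S, X * Yᵀ = Y * Xᵀ := by
  intro X hX Y hY
  rw [(hsymm X hX).eq, (hsymm Y hY).eq]
  exact (Set.pairwise_iff_of_refl.mp hcomm hX hY).eq

section Rmat

variable {n : ℕ} {l m : Type*}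

theorem isSymm_Rmat : (Rmat n).IsSymm := by
  ext i j
  simp only [transpose_apply, Rmat, of_apply, add_comm]

theorem Rmat_eq_permMatrix : Rmat n = Equiv.Perm.permMatrix ℝ (Equiv.subLeft (-1)) := by
  ext i j
  simp [Rmat, PEquiv.toMatrix_apply, sub_eq_iff_eq_add', eq_comm (a := i + j)]

variable [NeZero n]

theorem mul_Rmat (X : Matrix m (ZMod n) ℝ) : X * Rmat n = X.submatrix id fun j => -1 - j := by
  rw [Rmat_eq_permMatrix, PEquiv.mul_toMatrix_toPEquiv]
  ext i j
  simp [neg_add_eq_sub]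

theorem Rmat_mul (X : Matrix (ZMod n) m ℝ) : Rmat n * X = X.submatrix (fun i => -1 - i) id := by
  rw [Rmat_eq_permMatrix, PEquiv.toMatrix_toPEquiv_mul]
  rfl

theorem Rmat_mul_self : Rmat n * Rmat n = 1 := by
  rw [mul_Rmat]
  ext i j
  simp [Rmat, one_apply, add_sub_left_comm i, sub_eq_zero]

theorem mul_Rmat_mul_transpose (X : Matrix l (ZMod n) ℝ) (Y : Matrix m (ZMod n) ℝ) :
    X * Rmat n * (Y * Rmat n)ᵀ = X * Yᵀ := by
  rw [transpose_mul, isSymm_Rmat.eq, Matrix.mul_assoc, ← Matrix.mul_assoc (Rmat n),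
    Rmat_mul_self, Matrix.one_mul]

variable {X Y : Matrix (ZMod n) (ZMod n) ℝ}

protected theorem IsPM1.mul_Rmat (hX : IsPM1 X) : IsPM1 (X * Rmat n) := by
  rw [mul_Rmat]
  exact fun i j => hX i (-1 - j)

namespace IsCirculant

theorem mul_Rmat_eq_Rmat_mul_transpose (hX : IsCirculant X) : X * Rmat n = Rmat n * Xᵀ := by
  ext i j
  rw [mul_Rmat, Rmat_mul]
  simp only [submatrix_apply, transpose_apply, id_eq]
  rw [hX i, hX j, sub_right_comm]

theorem isSymm_mul_Rmat (hX : IsCirculant X) : (X * Rmat n).IsSymm := by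
  rw [IsSymm, transpose_mul, isSymm_Rmat.eq, hX.mul_Rmat_eq_Rmat_mul_transpose]

theorem commute_mul_Rmat (hX : IsCirculant X) (hY : IsCirculant Y) (hYs : Y.IsSymm) :
    Commute (X * Rmat n) Y := by
  have hRY : Commute (Rmat n) Y := by
    rw [Commute, SemiconjBy, hY.mul_Rmat_eq_Rmat_mul_transpose, hYs.eq]
  exact (hX.commute hY).mul_left hRY

end IsCirculant

end Rmat

/-- If `A, B, C, D` are near Williamson matrices of order `n`, then the
four `(-1,1)`-matrices `AR, B, C, D` satisfy `XYᵀ = YXᵀ` for all `X, Y` among them,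
and `(AR)(AR)ᵀ + BBᵀ + CCᵀ + DDᵀ = 4n·I`. -/
theorem nearWilliamson_gives_williamson_type (n : ℕ) [NeZero n]
    (A B C D : Matrix (ZMod n) (ZMod n) ℝ) (h : IsNearWilliamson n A B C D) :
    IsPM1 (A * Rmat n) ∧
    (∀ X ∈ ({A * Rmat n, B, C, D} : Set (Matrix (ZMod n) (ZMod n) ℝ)),
      ∀ Y ∈ ({A * Rmat n, B, C, D} : Set (Matrix (ZMod n) (ZMod n) ℝ)),
        X * Yᵀ = Y * Xᵀ) ∧
    (A * Rmat n) * (A * Rmat n)ᵀ + B * Bᵀ + C * Cᵀ + D * Dᵀ = (4 * n : ℝ) • 1 := by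
  obtain ⟨hA, -, -, -, cA, cB, cC, cD, sB, sC, sD, hsum⟩ := h
  have hsymm : ∀ X ∈ ({A * Rmat n, B, C, D} : Set (Matrix (ZMod n) (ZMod n) ℝ)), X.IsSymm := by
    rintro X (rfl | rfl | rfl | rfl)
    exacts [cA.isSymm_mul_Rmat, sB, sC, sD]
  have hcomm : ({A * Rmat n, B, C, D} : Set (Matrix (ZMod n) (ZMod n) ℝ)).Pairwise Commute := by
    simp [Set.pairwise_insert_of_symm, cA.commute_mul_Rmat cB sB,
      cA.commute_mul_Rmat cC sC, cA.commute_mul_Rmat cD sD, cB.commute cC, cB.commute cD,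
      cC.commute cD]
  refine ⟨hA.mul_Rmat, mul_transpose_eq_of_isSymm_of_pairwise_commute hsymm hcomm, ?_⟩
  rwa [mul_Rmat_mul_transpose]
end

section
/- Let n be a positive integer and let A, B, C, D be n×n matrices with entries in {-1, 1} (regarded as complex matrices) such that AAᵀ + BBᵀ + CCᵀ + DDᵀ = 4n·I and XYᵀ = YXᵀ for all X, Y ∈ {A, B, C, D}. Then the 2n×2n block matrix H = ((1+i)/2)·[[A + iB, C + iD], [iC + D, -iA - B]] has all its entries in {-i, -1, 1, i} and satisfies HH* = 2n·I, where H* denotes the conjugate transpose; that is, H is a quaternary Hadamard matrix of order 2n. -/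
open Matrix Complex

/-!
Put `ζ = (1 + i)/2`, `P = ζ(A + iB)` and `Q = ζ(C + iD)`. Multiplication by `ζ` carries the four
numbers `±1 ± i` to the fourth roots of unity, and `iζ = -ζ̄` turns `H` into the complex form
`[[P, Q], [-Q̄, P̄]]` of the quaternionic matrix `P + Qj`. The off-diagonal blocks of `HH*` vanish
because `PQᵀ` is symmetric, and the diagonal blocks are `PP* + QQ*` and its transpose.
-/

section QuaternionBlock

variable {m k R : Type*} [CommRing R] [StarRing R]

/-- The matrix `[[P, Q], [-Q̄, P̄]]`, where the bar is entrywise `star`. For complex `P` and `Q` it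
is the usual complex representation of the quaternionic matrix `P + Qj`. -/
def quaternionBlock (P Q : Matrix m k R) : Matrix (m ⊕ m) (k ⊕ k) R :=
  fromBlocks P Q (-Q.map star) (P.map star)

theorem quaternionBlock_apply_mem {S : Set R} (hneg : ∀ z ∈ S, -z ∈ S)
    (hstar : ∀ z ∈ S, star z ∈ S) {P Q : Matrix m k R} (hP : ∀ i j, P i j ∈ S)
    (hQ : ∀ i j, Q i j ∈ S) (i : m ⊕ m) (j : k ⊕ k) : quaternionBlock P Q i j ∈ S := by
  rcases i with i | i <;> rcases j with j | j
  · exact hP i j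
  · exact hQ i j
  · exact hneg _ (hstar _ (hQ i j))
  · exact hstar _ (hP i j)

theorem quaternionBlock_mul_conjTranspose [Fintype k] {P Q : Matrix m k R}
    (hPQ : (P * Qᵀ).IsSymm) :
    quaternionBlock P Q * (quaternionBlock P Q)ᴴ =
      fromBlocks (P * Pᴴ + Q * Qᴴ) 0 0 (P * Pᴴ + Q * Qᴴ)ᵀ := by
  have hcomm : Q * Pᵀ = P * Qᵀ := by simpa [IsSymm] using hPQ
  have hcomm_star : Q.map star * Pᴴ = P.map star * Qᴴ := by
    simpa only [conjTranspose_mul, transpose_conjTranspose]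
      using congr_arg conjTranspose hcomm.symm
  have conjTranspose_map_star (X : Matrix m k R) : (X.map star)ᴴ = Xᵀ := by
    rw [← transpose_conjTranspose, conjTranspose_conjTranspose]
  simp only [quaternionBlock, fromBlocks_conjTranspose, fromBlocks_multiply, conjTranspose_neg,
    conjTranspose_map_star, transpose_add, transpose_mul, conjTranspose_transpose,
    Matrix.mul_neg, Matrix.neg_mul, neg_neg, hcomm, hcomm_star, neg_add_cancel]
  rw [add_comm (Q.map star * Qᵀ)]

end QuaternionBlock

section SignMatrices

variable {m k : Type*}

/-- A matrix with entries in `{-1, 1}`, regarded as a complex matrix. -/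
def IsSignMatrix (X : Matrix m k ℂ) : Prop :=
  ∀ i j, X i j = 1 ∨ X i j = -1

theorem IsSignMatrix.map_star {X : Matrix m k ℂ} (hX : IsSignMatrix X) : X.map star = X := by
  ext i j
  rcases hX i j with h | h <;> simp [h]

/-- The matrix `(1 + i)/2 · (A + iB)`, which encodes a pair of `(-1, 1)`-matrices `A, B` as a single
matrix with entries in `{-i, -1, 1, i}`. -/
noncomputable def quaternaryOfSigns (A B : Matrix m k ℂ) : Matrix m k ℂ :=
  ((1 + I) / 2) • (A + I • B)

theorem quaternaryOfSigns_apply_mem {A B : Matrix m k ℂ} (hA : IsSignMatrix A)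
    (hB : IsSignMatrix B) (i : m) (j : k) :
    quaternaryOfSigns A B i j ∈ ({-I, -1, 1, I} : Set ℂ) := by
  rcases hA i j with ha | ha <;> rcases hB i j with hb | hb <;>
    norm_num [quaternaryOfSigns, ha, hb, Complex.ext_iff]

theorem map_star_quaternaryOfSigns {A B : Matrix m k ℂ} (hA : A.map star = A)
    (hB : B.map star = B) : (quaternaryOfSigns A B).map star = -quaternaryOfSigns B A := by
  ext i j
  have ha : star (A i j) = A i j := congr_fun₂ hA i j
  have hb : star (B i j) = B i j := congr_fun₂ hB i j
  have hI : star I = -I := conj_I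
  simp only [quaternaryOfSigns, map_apply, Matrix.smul_apply, Matrix.add_apply, Matrix.neg_apply,
    smul_eq_mul, star_mul', star_add, star_div₀, star_one, star_ofNat, ha, hb, hI]
  linear_combination ((A i j + B i j) / 2) * I_sq

theorem smul_fromBlocks_eq_quaternionBlock {A B C D : Matrix m k ℂ} (hA : A.map star = A)
    (hB : B.map star = B) (hC : C.map star = C) (hD : D.map star = D) :
    ((1 + I) / 2) • fromBlocks (A + I • B) (C + I • D) (I • C + D) (-(I • A) - B) =
      quaternionBlock (quaternaryOfSigns A B) (quaternaryOfSigns C D) := by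
  rw [quaternionBlock, map_star_quaternaryOfSigns hA hB, map_star_quaternaryOfSigns hC hD, neg_neg,
    fromBlocks_smul]
  simp only [quaternaryOfSigns, ← smul_neg, neg_add_rev, sub_eq_add_neg, add_comm D]

variable [Fintype k]

theorem quaternaryOfSigns_mul_transpose (A B C D : Matrix m k ℂ) :
    quaternaryOfSigns A B * (quaternaryOfSigns C D)ᵀ =
      (I / 2) • (A * Cᵀ - B * Dᵀ + I • (A * Dᵀ + B * Cᵀ)) := by
  have sq_scalar : (1 + I) / 2 * ((1 + I) / 2) = I / 2 := by linear_combination I_sq / 4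
  have mul_gaussian : (A + I • B) * (C + I • D)ᵀ =
      A * Cᵀ - B * Dᵀ + I • (A * Dᵀ + B * Cᵀ) := by
    simp only [transpose_add, transpose_smul, Matrix.add_mul, Matrix.mul_add, Matrix.smul_mul,
      Matrix.mul_smul]
    linear_combination (norm := module) I_sq • (B * Dᵀ : Matrix m m ℂ)
  rw [quaternaryOfSigns, quaternaryOfSigns, transpose_smul, Matrix.smul_mul, Matrix.mul_smul,
    smul_smul, sq_scalar, mul_gaussian]

theorem quaternaryOfSigns_mul_conjTranspose {A B : Matrix m k ℂ} (hA : A.map star = A)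
    (hB : B.map star = B) :
    quaternaryOfSigns A B * (quaternaryOfSigns A B)ᴴ =
      (1 / 2 : ℂ) • (A * Aᵀ + B * Bᵀ + I • (B * Aᵀ - A * Bᵀ)) := by
  have conjTranspose_eq : (quaternaryOfSigns A B)ᴴ = -(quaternaryOfSigns B A)ᵀ := by
    rw [← transpose_neg, ← map_star_quaternaryOfSigns hA hB, ← conjTranspose_transpose,
      transpose_transpose]
  rw [conjTranspose_eq, Matrix.mul_neg, quaternaryOfSigns_mul_transpose]
  linear_combination (norm := module) (-1 / 2 : ℂ) • I_sq • (A * Aᵀ + B * Bᵀ : Matrix m m ℂ)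

theorem isSymm_quaternaryOfSigns_mul_transpose {A B C D : Matrix m k ℂ}
    (hre : (A * Cᵀ - B * Dᵀ).IsSymm) (him : (A * Dᵀ + B * Cᵀ).IsSymm) :
    (quaternaryOfSigns A B * (quaternaryOfSigns C D)ᵀ).IsSymm := by
  rw [quaternaryOfSigns_mul_transpose]
  exact (hre.add (him.smul I)).smul (I / 2)

theorem quaternaryOfSigns_mul_conjTranspose_add {A B C D : Matrix m k ℂ} (hA : A.map star = A)
    (hB : B.map star = B) (hC : C.map star = C) (hD : D.map star = D)
    (hsymm : (A * Bᵀ + C * Dᵀ).IsSymm) :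
    quaternaryOfSigns A B * (quaternaryOfSigns A B)ᴴ +
        quaternaryOfSigns C D * (quaternaryOfSigns C D)ᴴ =
      (1 / 2 : ℂ) • (A * Aᵀ + B * Bᵀ + C * Cᵀ + D * Dᵀ) := by
  have him : B * Aᵀ + D * Cᵀ = A * Bᵀ + C * Dᵀ := by simpa [IsSymm] using hsymm
  rw [quaternaryOfSigns_mul_conjTranspose hA hB, quaternaryOfSigns_mul_conjTranspose hC hD]
  linear_combination (norm := module) (I / 2) • him

end SignMatrices

/-- The symmetry of `ABᵀ + CDᵀ` makes `PP* + QQ*` real; the other two symmetries make `PQᵀ`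
symmetric. -/
theorem quaternary_hadamard_construction_general {m k : Type*} [DecidableEq m] [Fintype k]
    {A B C D : Matrix m k ℂ} (hA : IsSignMatrix A) (hB : IsSignMatrix B) (hC : IsSignMatrix C)
    (hD : IsSignMatrix D)
    (hadd : A * Aᵀ + B * Bᵀ + C * Cᵀ + D * Dᵀ = (4 * Fintype.card k : ℂ) • 1)
    (hAB_CD : (A * Bᵀ + C * Dᵀ).IsSymm) (hAC_BD : (A * Cᵀ - B * Dᵀ).IsSymm)
    (hAD_BC : (A * Dᵀ + B * Cᵀ).IsSymm) :
    let H := ((1 + I) / 2) • fromBlocks (A + I • B) (C + I • D) (I • C + D) (-(I • A) - B)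
    (∀ i j, H i j ∈ ({-I, -1, 1, I} : Set ℂ)) ∧ H * Hᴴ = (2 * Fintype.card k : ℂ) • 1 := by
  intro H
  have hH : H = quaternionBlock (quaternaryOfSigns A B) (quaternaryOfSigns C D) :=
    smul_fromBlocks_eq_quaternionBlock hA.map_star hB.map_star hC.map_star hD.map_star
  rw [hH]
  constructor
  · refine quaternionBlock_apply_mem ?_ ?_ (quaternaryOfSigns_apply_mem hA hB)
      (quaternaryOfSigns_apply_mem hC hD)
    · rintro z (rfl | rfl | rfl | rfl) <;> simp
    · rintro z (rfl | rfl | rfl | rfl) <;> simp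
  · rw [quaternionBlock_mul_conjTranspose (isSymm_quaternaryOfSigns_mul_transpose hAC_BD hAD_BC),
      quaternaryOfSigns_mul_conjTranspose_add hA.map_star hB.map_star hC.map_star hD.map_star
        hAB_CD, hadd, smul_smul, transpose_smul, transpose_one, ← fromBlocks_one, fromBlocks_smul,
      smul_zero]
    congr 2 <;> ring

/-- If four `n × n` `(-1,1)`-matrices `A, B, C, D` (regarded as complex
matrices) satisfy `AAᵀ + BBᵀ + CCᵀ + DDᵀ = 4n·I` and `XYᵀ = YXᵀ` for all
`X, Y ∈ {A, B, C, D}`, then `H = ((1+i)/2)·[[A+iB, C+iD], [iC+D, -iA-B]]` has all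
entries in `{-i, -1, 1, i}` and satisfies `HH* = 2n·I`. -/
theorem quaternary_hadamard_construction (n : ℕ) (hn : 0 < n)
    (A B C D : Matrix (Fin n) (Fin n) ℂ)
    (hpm : ∀ X ∈ ({A, B, C, D} : Set (Matrix (Fin n) (Fin n) ℂ)),
      ∀ i j, X i j = 1 ∨ X i j = -1)
    (hadd : A * Aᵀ + B * Bᵀ + C * Cᵀ + D * Dᵀ = (4 * n : ℂ) • 1)
    (hami : ∀ X ∈ ({A, B, C, D} : Set (Matrix (Fin n) (Fin n) ℂ)),
      ∀ Y ∈ ({A, B, C, D} : Set (Matrix (Fin n) (Fin n) ℂ)), X * Yᵀ = Y * Xᵀ) :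
    let H := ((1 + Complex.I) / 2) • Matrix.fromBlocks
      (A + Complex.I • B) (C + Complex.I • D)
      (Complex.I • C + D) (-(Complex.I • A) - B)
    (∀ i j, H i j ∈ ({-Complex.I, -1, 1, Complex.I} : Set ℂ)) ∧
      H * Hᴴ = (2 * n : ℂ) • 1 := by
  have hsymm : ∀ X ∈ ({A, B, C, D} : Set (Matrix (Fin n) (Fin n) ℂ)),
      ∀ Y ∈ ({A, B, C, D} : Set (Matrix (Fin n) (Fin n) ℂ)), (X * Yᵀ).IsSymm := by
    intro X hX Y hY
    rw [IsSymm, transpose_mul, transpose_transpose, hami Y hY X hX]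
  simpa only [Fintype.card_fin] using quaternary_hadamard_construction_general
    (hpm A (by simp)) (hpm B (by simp)) (hpm C (by simp)) (hpm D (by simp))
    (by rwa [Fintype.card_fin])
    ((hsymm A (by simp) B (by simp)).add (hsymm C (by simp) D (by simp)))
    ((hsymm A (by simp) C (by simp)).sub (hsymm B (by simp) D (by simp)))
    ((hsymm A (by simp) D (by simp)).add (hsymm B (by simp) C (by simp)))
end

section
/- There exist near Williamson matrices of order 47; that is, there exist a 47×47 circulant (-1,1)-matrix A and three 47×47 symmetric circulant (-1,1)-matrices B, C, D such that AAᵀ + BBᵀ + CCᵀ + DDᵀ = 188·I. -/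
open Matrix

/-!
The `±1` circulant matrix whose first column is `-1` exactly on `S ⊆ G` has Gram matrix with
`(i, j)` entry `|G| - 4|S| + 4 N_S(i - j)`, where `N_S(d)` counts the ways to write `d` as a
difference of two elements of `S`. Hence for four sets of total size `|G| + l` in which every
nonzero `d` occurs as a difference `l` times altogether, the off-diagonal entries of the four Gram
matrices cancel. In `ℤ/47` there are such sets of sizes `22, 24, 30, 22`, with `l = 51`, the last
three of which are closed under negation.
-/

open Finset
open scoped Pointwise

section SignCirculant

variable {G R : Type*} [AddGroup G] [DecidableEq G]

/-- The circulant `(-1,1)`-matrix whose first column is `-1` exactly on `S`. It is built on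
Mathlib's `Matrix.circulant`, in which the `(i, j)` entry depends on `i - j`. -/
def signCirculant (R : Type*) [Ring R] (S : Finset G) : Matrix G G R :=
  circulant fun x => if x ∈ S then -1 else 1

/-- The number of representations of `d` as a difference `y - x` with `x, y ∈ S`, counted by the
subtrahend `x`. -/
def differenceCount (S : Finset G) (d : G) : ℕ :=
  #{x ∈ S | d + x ∈ S}

/-- Supplementary difference sets: every nonzero element of `G` occurs exactly `l` times as a
difference within one of the sets `S i`. -/
def IsSupplementaryDifferenceSets {ι : Type*} [Fintype ι] (S : ι → Finset G) (l : ℕ) : Prop :=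
  ∀ d ≠ 0, ∑ i, differenceCount (S i) d = l

theorem differenceCount_zero (S : Finset G) : differenceCount S 0 = #S := by
  simp [differenceCount]

theorem isSymm_signCirculant [Ring R] {S : Finset G} (hS : -S = S) :
    (signCirculant R S).IsSymm :=
  circulant_isSymm_iff.2 fun x => by simp only [← mem_neg', hS]

theorem signCirculant_apply_mul_apply [Ring R] (S : Finset G) (i j k : G) :
    signCirculant R S i k * signCirculant R S j k =
      1 - 2 * (if i - k ∈ S then 1 else 0) - 2 * (if j - k ∈ S then 1 else 0) +
        4 * (if j - k ∈ S ∧ i - k ∈ S then 1 else 0) := by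
  simp only [signCirculant, circulant_apply]
  by_cases hi : i - k ∈ S <;> by_cases hj : j - k ∈ S <;> simp [hi, hj] <;> norm_num

variable [Fintype G]

theorem card_filter_sub_mem (S : Finset G) (i : G) : #{k | i - k ∈ S} = #S :=
  card_equiv (Equiv.subLeft i) (by simp)

theorem card_filter_sub_mem_and_sub_mem (S : Finset G) (i j : G) :
    #{k | j - k ∈ S ∧ i - k ∈ S} = differenceCount S (i - j) :=
  card_equiv (Equiv.subLeft j) (by simp [sub_add_sub_cancel])

theorem signCirculant_mul_transpose_apply [Ring R] (S : Finset G) (i j : G) :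
    (signCirculant R S * (signCirculant R S)ᵀ) i j =
      Fintype.card G - 4 * #S + 4 * differenceCount S (i - j) := by
  simp only [mul_apply, transpose_apply, signCirculant_apply_mul_apply,
    sum_add_distrib, sum_sub_distrib, ← mul_sum, sum_boole, card_filter_sub_mem,
    card_filter_sub_mem_and_sub_mem, sum_const, card_univ, nsmul_one]
  noncomm_ring

theorem IsSupplementaryDifferenceSets.sum_signCirculant_mul_transpose [Ring R]
    {ι : Type*} [Fintype ι] {S : ι → Finset G} {l : ℕ} (hS : IsSupplementaryDifferenceSets S l)
    (hcard : 4 * ∑ t, #(S t) = Fintype.card ι * Fintype.card G + 4 * l) :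
    ∑ t, signCirculant R (S t) * (signCirculant R (S t))ᵀ =
      (Fintype.card ι * Fintype.card G : R) • (1 : Matrix G G R) := by
  have entry (i j : G) : (∑ t, signCirculant R (S t) * (signCirculant R (S t))ᵀ) i j =
      Fintype.card ι * Fintype.card G - 4 * (∑ t, #(S t) : ℕ) +
        4 * (∑ t, differenceCount (S t) (i - j) : ℕ) := by
    simp only [Matrix.sum_apply, signCirculant_mul_transpose_apply, sum_add_distrib,
      sum_sub_distrib, ← mul_sum, sum_const, card_univ, nsmul_eq_mul, Nat.cast_sum]
  have hcardR : (4 * (∑ t, #(S t) : ℕ) : R) = Fintype.card ι * Fintype.card G + 4 * l := by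
    exact_mod_cast congrArg (Nat.cast : ℕ → R) hcard
  ext i j
  rw [entry, Matrix.smul_apply, smul_eq_mul]
  obtain rfl | hij := eq_or_ne i j
  · simp [differenceCount_zero]
  · rw [hS _ (sub_ne_zero.2 hij), hcardR, one_apply_ne hij]
    simp

end SignCirculant

theorem isCirculant_signCirculant {n : ℕ} {R : Type*} [Ring R] (S : Finset (ZMod n)) :
    IsCirculant (signCirculant R S) := fun i j => by
  simp [signCirculant]

theorem isPM1_signCirculant {n : ℕ} (S : Finset (ZMod n)) : IsPM1 (signCirculant ℝ S) :=
  fun i j => (ite_eq_or_eq (i - j ∈ S) (-1 : ℝ) 1).symm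

theorem neg_union_neg_self {G : Type*} [InvolutiveNeg G] [DecidableEq G] (H : Finset G) :
    -(H ∪ -H) = H ∪ -H := by
  ext x
  simp [or_comm]

/-- Supplementary difference sets in `ℤ/47`, the last three symmetric: the positions of `-1` in the
first columns of near Williamson matrices `A, B, C, D`. -/
def nearWilliamsonSets : Fin 4 → Finset (ZMod 47) :=
  ![{1, 5, 9, 11, 15, 17, 19, 20, 24, 25, 28, 30, 31, 33, 35, 36, 40, 41, 42, 43, 44, 45},
    {1, 2, 4, 11, 12, 13, 16, 17, 18, 20, 22, 23} ∪
      -{1, 2, 4, 11, 12, 13, 16, 17, 18, 20, 22, 23},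
    {3, 4, 7, 8, 9, 10, 11, 12, 13, 16, 17, 18, 19, 20, 22} ∪
      -{3, 4, 7, 8, 9, 10, 11, 12, 13, 16, 17, 18, 19, 20, 22},
    {2, 4, 6, 11, 13, 14, 16, 17, 19, 20, 23} ∪
      -{2, 4, 6, 11, 13, 14, 16, 17, 19, 20, 23}]

theorem isSupplementaryDifferenceSets_nearWilliamsonSets :
    IsSupplementaryDifferenceSets nearWilliamsonSets 51 := by
  unfold IsSupplementaryDifferenceSets
  decide +kernel

theorem sum_card_nearWilliamsonSets : ∑ t, #(nearWilliamsonSets t) = 98 := by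
  decide +kernel

/-- There exist near Williamson matrices of order 47: a circulant
`(-1,1)`-matrix `A` and symmetric circulant `(-1,1)`-matrices `B, C, D` of order
47 with `AAᵀ + BBᵀ + CCᵀ + DDᵀ = 188·I`. -/
theorem exists_nearWilliamson_47 :
    ∃ A B C D : Matrix (ZMod 47) (ZMod 47) ℝ,
      IsPM1 A ∧ IsPM1 B ∧ IsPM1 C ∧ IsPM1 D ∧
      IsCirculant A ∧ IsCirculant B ∧ IsCirculant C ∧ IsCirculant D ∧
      B.IsSymm ∧ C.IsSymm ∧ D.IsSymm ∧
      A * Aᵀ + B * Bᵀ + C * Cᵀ + D * Dᵀ = (188 : ℝ) • 1 := by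
  let M (t : Fin 4) : Matrix (ZMod 47) (ZMod 47) ℝ := signCirculant ℝ (nearWilliamsonSets t)
  have hgram : ∑ t, M t * (M t)ᵀ = (188 : ℝ) • 1 := by
    convert isSupplementaryDifferenceSets_nearWilliamsonSets.sum_signCirculant_mul_transpose
      (by simp [sum_card_nearWilliamsonSets]) using 2
    norm_num [ZMod.card]
  rw [Fin.sum_univ_four] at hgram
  exact ⟨M 0, M 1, M 2, M 3,
    isPM1_signCirculant _, isPM1_signCirculant _, isPM1_signCirculant _, isPM1_signCirculant _,
    isCirculant_signCirculant _, isCirculant_signCirculant _, isCirculant_signCirculant _,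
    isCirculant_signCirculant _,
    isSymm_signCirculant (neg_union_neg_self _), isSymm_signCirculant (neg_union_neg_self _),
    isSymm_signCirculant (neg_union_neg_self _), hgram⟩
end

section
/- There exists a quaternary Hadamard matrix of order 118, i.e., a 118×118 complex matrix H with all entries in {-i, -1, 1, i} satisfying HH* = 118·I. -/
open Matrix

/-!
If `P` and `Q` commute and `P Pᴴ + Q Qᴴ = Pᴴ P + Qᴴ Q = c I`, then the block matrix
`[P, Q; Qᴴ, -Pᴴ]` has Gram matrix `c I`. A Legendre pair `(a, b)` over a group of order `n` says
that the circulants `A`, `B` of `a`, `b` satisfy `A Aᴴ + B Bᴴ = (2n + 2) I - 2 J`. Bordering each of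
them with a row and a column of ones adds `2 J` and cancels the defect. The two corner entries `x`,
`y` are then determined by orthogonality to the border, `x + y = -star (∑ a + ∑ b)`, and by
commutation of the bordered circulants, `x - y = ∑ a - ∑ b`. An explicit quaternary Legendre pair of
length 58, with sums `0` and `1 + i`, admits `x = -1`, `y = i` and gives order `2 * 58 + 2 = 118`.
-/

section ConjugateDouble

variable {m R : Type*} [Ring R] [StarRing R]

/-- The block matrix `[P, Q; Qᴴ, -Pᴴ]`, the matrix analogue of the `2 × 2` array
`[z, w; star w, -star z]` with orthogonal rows. -/
def conjugateDouble (P Q : Matrix m m R) : Matrix (m ⊕ m) (m ⊕ m) R :=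
  fromBlocks P Q Qᴴ (-Pᴴ)

theorem conjugateDouble_apply_mem_unitary {P Q : Matrix m m R}
    (hP : ∀ i j, P i j ∈ unitary R) (hQ : ∀ i j, Q i j ∈ unitary R) (i j : m ⊕ m) :
    conjugateDouble P Q i j ∈ unitary R := by
  rcases i with i | i <;> rcases j with j | j
  · exact hP i j
  · exact hQ i j
  · exact Unitary.star_mem (hQ j i)
  · exact (-⟨star (P j i), Unitary.star_mem (hP j i)⟩ : unitary R).2

theorem conjugateDouble_mul_conjTranspose [Fintype m] [DecidableEq m] {P Q : Matrix m m R} {c : R}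
    (hPQ : Commute P Q) (hrow : P * Pᴴ + Q * Qᴴ = c • 1) (hcol : Pᴴ * P + Qᴴ * Q = c • 1) :
    conjugateDouble P Q * (conjugateDouble P Q)ᴴ = c • 1 := by
  have hPQ' : Qᴴ * Pᴴ = Pᴴ * Qᴴ := by rw [← conjTranspose_mul, ← conjTranspose_mul, hPQ.eq]
  rw [conjugateDouble, fromBlocks_conjTranspose, fromBlocks_multiply, ← fromBlocks_one,
    fromBlocks_smul]
  simp only [conjTranspose_conjTranspose, conjTranspose_neg, mul_neg, neg_mul, neg_neg, hPQ.eq,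
    hPQ', add_neg_cancel, hrow, add_comm (Qᴴ * Q), hcol, smul_zero]

end ConjugateDouble

section BorderedCirculant

variable {G R : Type*} [AddGroup G]

/-- The circulant matrix of `a` bordered by a row and a column of ones, with corner entry `x`. -/
def borderedCirculant [One R] (x : R) (a : G → R) : Matrix (Unit ⊕ G) (Unit ⊕ G) R :=
  fromBlocks (of fun _ _ => x) (of fun _ _ => 1) (of fun _ _ => 1) (circulant a)

theorem borderedCirculant_apply_mem_unitary [Monoid R] [StarMul R] {x : R} {a : G → R}
    (hx : x ∈ unitary R) (ha : ∀ g, a g ∈ unitary R) :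
    ∀ i j, borderedCirculant x a i j ∈ unitary R
  | .inl _, .inl _ => hx
  | .inl _, .inr _ => one_mem _
  | .inr _, .inl _ => one_mem _
  | .inr i, .inr j => ha (i - j)

theorem conjTranspose_borderedCirculant [Monoid R] [StarMul R] (x : R) (a : G → R) :
    (borderedCirculant x a)ᴴ = borderedCirculant (star x) (star fun g => a (-g)) := by
  rw [borderedCirculant, fromBlocks_conjTranspose, conjTranspose_circulant, borderedCirculant]
  congr 1 <;> ext <;> simp

theorem borderedCirculant_mul [Fintype G] [Semiring R] (x y : R) (a b : G → R) :
    borderedCirculant x a * borderedCirculant y b =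
      fromBlocks (of fun _ _ => x * y + Fintype.card G) (of fun _ _ => x + ∑ g, b g)
        (of fun _ _ => y + ∑ g, a g) (circulant a * circulant b + of fun _ _ => 1) := by
  have row_sum (i : G) : ∑ j, a (i - j) = ∑ g, a g := (Equiv.subLeft i).sum_comp a
  have col_sum (j : G) : ∑ i, b (i - j) = ∑ g, b g := (Equiv.subRight j).sum_comp b
  rw [borderedCirculant, borderedCirculant, fromBlocks_multiply]
  congr 1 <;> ext i j <;> simp [mul_apply, row_sum, col_sum, add_comm]

end BorderedCirculant

theorem sum_star_neg {G R : Type*} [AddGroup G] [Fintype G] [AddCommMonoid R] [StarAddMonoid R]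
    (a : G → R) : ∑ g, (star fun g => a (-g)) g = star (∑ g, a g) := by
  rw [star_sum]
  exact Equiv.sum_comp (Equiv.neg G) fun g => star (a g)

theorem borderedCirculant_commute {G R : Type*} [AddCommGroup G] [Fintype G] [CommRing R]
    {x y : R} {a b : G → R} (h : x - y = ∑ g, a g - ∑ g, b g) :
    Commute (borderedCirculant x a) (borderedCirculant y b) := by
  have h' : x + ∑ g, b g = y + ∑ g, a g := by linear_combination h
  rw [commute_iff_eq, borderedCirculant_mul, borderedCirculant_mul, h', mul_comm x,
    circulant_mul_comm a]

section LegendrePair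

variable {G R : Type*} [AddCommGroup G] [Fintype G] [CommRing R] [StarRing R]

/-- The periodic autocorrelation `d ↦ ∑ x, a (x + d) * star (a x)` of a function on a finite abelian
group; for `G = ZMod n` it is the usual one of sequences of period `n`. -/
def periodicAutocorrelation (a : G → R) (d : G) : R :=
  ∑ x, a (x + d) * star (a x)

theorem periodicAutocorrelation_zero {a : G → R} (ha : ∀ x, a x ∈ unitary R) :
    periodicAutocorrelation a 0 = Fintype.card G := by
  simp [periodicAutocorrelation, Unitary.mul_star_self_of_mem (ha _)]

theorem periodicAutocorrelation_star_neg (a : G → R) :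
    periodicAutocorrelation (star fun x => a (-x)) = periodicAutocorrelation a := by
  ext d
  refine Fintype.sum_equiv ((Equiv.addRight d).trans (Equiv.neg G)) _ _ fun x => ?_
  simp [mul_comm]

theorem circulant_mul_conjTranspose (a : G → R) :
    circulant a * (circulant a)ᴴ = circulant (periodicAutocorrelation a) := by
  ext i j
  rw [mul_apply, circulant_apply, periodicAutocorrelation]
  refine Fintype.sum_equiv (Equiv.subLeft j) _ _ fun k => ?_
  simp

/-- Legendre pairs over a finite abelian group: functions with unitary values whose periodic
autocorrelations add up to `-2` away from `0`. The classical binary and quaternary Legendre pairs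
of length `n` are the cases `R = ℤ` and `R = ℤ[i]` with `G = ZMod n`. -/
structure IsLegendrePair (a b : G → R) : Prop where
  left_mem (x : G) : a x ∈ unitary R
  right_mem (x : G) : b x ∈ unitary R
  autocorrelation_add (d : G) (hd : d ≠ 0) :
    periodicAutocorrelation a d + periodicAutocorrelation b d = -2

namespace IsLegendrePair

variable {a b : G → R} {x y : R}

protected theorem star_neg (hab : IsLegendrePair a b) :
    IsLegendrePair (star fun g => a (-g)) (star fun g => b (-g)) where
  left_mem _ := Unitary.star_mem (hab.left_mem _)
  right_mem _ := Unitary.star_mem (hab.right_mem _)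
  autocorrelation_add d hd := by
    simpa only [periodicAutocorrelation_star_neg] using hab.autocorrelation_add d hd

variable [DecidableEq G]

theorem circulant_gram (hab : IsLegendrePair a b) :
    circulant a * (circulant a)ᴴ + circulant b * (circulant b)ᴴ =
      (2 * (Fintype.card G + 1) : R) • 1 - of fun _ _ => 2 := by
  ext i j
  rw [circulant_mul_conjTranspose, circulant_mul_conjTranspose, ← circulant_add, circulant_apply,
    Pi.add_apply]
  rcases eq_or_ne i j with rfl | hij
  · rw [sub_self, periodicAutocorrelation_zero hab.left_mem,
      periodicAutocorrelation_zero hab.right_mem, Matrix.sub_apply, Matrix.smul_apply,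
      one_apply_eq, of_apply, smul_eq_mul]
    ring
  · rw [hab.autocorrelation_add _ (sub_ne_zero.mpr hij)]
    simp [hij]

theorem borderedCirculant_gram (hab : IsLegendrePair a b) (hx : x ∈ unitary R)
    (hy : y ∈ unitary R) (hborder : x + y = -star (∑ g, a g + ∑ g, b g)) :
    borderedCirculant x a * (borderedCirculant x a)ᴴ +
      borderedCirculant y b * (borderedCirculant y b)ᴴ = (2 * (Fintype.card G + 1) : R) • 1 := by
  have hcorner : x * star x + Fintype.card G + (y * star y + Fintype.card G) =
      2 * (Fintype.card G + 1) := by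
    rw [Unitary.mul_star_self_of_mem hx, Unitary.mul_star_self_of_mem hy]
    ring
  have hrow : x + star (∑ g, a g) + (y + star (∑ g, b g)) = 0 := by
    rw [star_add] at hborder
    linear_combination hborder
  have hcol : star x + ∑ g, a g + (star y + ∑ g, b g) = 0 := by
    simpa using congrArg star hrow
  have hgram := hab.circulant_gram
  rw [conjTranspose_circulant, conjTranspose_circulant] at hgram
  rw [conjTranspose_borderedCirculant, conjTranspose_borderedCirculant, borderedCirculant_mul,
    borderedCirculant_mul, fromBlocks_add, ← fromBlocks_one, fromBlocks_smul,
    add_add_add_comm (circulant a * _), hgram, sum_star_neg, sum_star_neg]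
  congr 1 <;> ext i j
  · simpa using hcorner
  · simpa using hrow
  · simpa using hcol
  · simp [one_add_one_eq_two]

theorem isHadamard_conjugateDouble (hab : IsLegendrePair a b)
    (hx : x ∈ unitary R) (hy : y ∈ unitary R)
    (hcommute : x - y = ∑ g, a g - ∑ g, b g)
    (hborder : x + y = -star (∑ g, a g + ∑ g, b g))
    (hcard : IsRegular (2 * (Fintype.card G + 1) : R)) :
    (conjugateDouble (borderedCirculant x a) (borderedCirculant y b)).IsHadamard := by
  have card_eq : (Fintype.card ((Unit ⊕ G) ⊕ (Unit ⊕ G)) : R) = 2 * (Fintype.card G + 1) := by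
    simp only [Fintype.card_sum, Fintype.card_unit]
    push_cast
    ring
  have hborder' : star x + star y =
      -star (∑ g, (star fun g => a (-g)) g + ∑ g, (star fun g => b (-g)) g) := by
    rw [sum_star_neg, sum_star_neg, ← star_add, ← star_add, hborder, star_neg]
  have hcol := hab.star_neg.borderedCirculant_gram (Unitary.star_mem hx) (Unitary.star_mem hy)
    hborder'
  rw [← conjTranspose_borderedCirculant, ← conjTranspose_borderedCirculant,
    conjTranspose_conjTranspose, conjTranspose_conjTranspose] at hcol
  refine IsHadamard.of_mul_conjTranspose ?_ ?_ (card_eq ▸ hcard)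
  · exact conjugateDouble_apply_mem_unitary
      (borderedCirculant_apply_mem_unitary hx hab.left_mem)
      (borderedCirculant_apply_mem_unitary hy hab.right_mem)
  · rw [card_eq]
    exact conjugateDouble_mul_conjTranspose (borderedCirculant_commute hcommute)
      (hab.borderedCirculant_gram hx hy hborder) hcol

end IsLegendrePair

end LegendrePair

theorem isHadamard_map {n R S : Type*} [Fintype n] [DecidableEq n] [Semiring R] [StarRing R]
    [Semiring S] [StarRing S] {H : Matrix n n R} (hH : H.IsHadamard) (f : R →+* S)
    (hf : Function.Semiconj f star star) : (H.map f).IsHadamard where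
  apply_mem i j := by
    simpa only [Unitary.mem_iff, map_apply, ← hf.eq, ← map_mul, map_one] using
      (Unitary.mem_iff.mp (hH.apply_mem i j)).imp (congrArg f) (congrArg f)
  mul_conjTranspose := by
    rw [← conjTranspose_map f hf, ← Matrix.map_mul, hH.mul_conjTranspose]
    ext i j
    simp [one_apply, apply_ite f]
  conjTranspose_mul := by
    rw [← conjTranspose_map f hf, ← Matrix.map_mul, hH.conjTranspose_mul]
    ext i j
    simp [one_apply, apply_ite f]

section Gaussian

open GaussianInt

theorem toComplex_mem_of_mem_unitary {z : GaussianInt} (hz : z ∈ unitary GaussianInt) :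
    toComplex z ∈ ({-Complex.I, -1, 1, Complex.I} : Set ℂ) := by
  obtain ⟨p, q⟩ := z
  have hnorm : p * p + q * q = 1 := by
    simpa [Zsqrtd.norm_def] using Zsqrtd.norm_eq_one_iff_mem_unitary.mpr hz
  obtain ⟨hp₁, hp₂⟩ : -1 ≤ p ∧ p ≤ 1 := by constructor <;> nlinarith
  obtain ⟨hq₁, hq₂⟩ : -1 ≤ q ∧ q ≤ 1 := by constructor <;> nlinarith
  interval_cases p <;> interval_cases q <;> simp_all [toComplex_def']

theorem sqrtd_mem_unitary_gaussianInt : (Zsqrtd.sqrtd : GaussianInt) ∈ unitary GaussianInt :=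
  Zsqrtd.norm_eq_one_iff_mem_unitary.mp rfl

/-- The left member `i ^ e` of a quaternary Legendre pair of length 58, given by its exponents `e`.
It is symmetric, and multiplying the index by `17` conjugates it. -/
def legendreLeft58 (x : ZMod 58) : GaussianInt :=
  Zsqrtd.sqrtd ^ (![
    0, 0, 2, 3, 1, 1, 0, 1, 3, 2, 3, 0, 2, 0, 0, 1, 1, 0, 3, 1,
    1, 2, 1, 3, 2, 3, 3, 3, 2, 2, 2, 3, 3, 3, 2, 3, 1, 2, 1, 1,
    3, 0, 1, 1, 0, 0, 2, 0, 3, 2, 3, 1, 0, 1, 1, 3, 2, 0] : Fin 58 → ℕ) x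

/-- The right member `i ^ e` of a quaternary Legendre pair of length 58, given by its exponents `e`.
It is symmetric and invariant under multiplying the index by `17`. -/
def legendreRight58 (x : ZMod 58) : GaussianInt :=
  Zsqrtd.sqrtd ^ (![
    0, 3, 1, 2, 3, 0, 1, 2, 0, 1, 3, 3, 3, 3, 1, 2, 0, 3, 0, 1,
    0, 1, 2, 2, 1, 1, 2, 0, 3, 1, 3, 0, 2, 1, 1, 2, 2, 1, 0, 1,
    0, 3, 0, 2, 1, 3, 3, 3, 3, 1, 0, 2, 1, 0, 3, 2, 1, 3] : Fin 58 → ℕ) x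

theorem sum_legendreLeft58 : ∑ x, legendreLeft58 x = 0 := by
  decide +kernel

theorem sum_legendreRight58 : ∑ x, legendreRight58 x = ⟨1, 1⟩ := by
  decide +kernel

theorem isLegendrePair_legendre58 : IsLegendrePair legendreLeft58 legendreRight58 where
  left_mem _ := pow_mem sqrtd_mem_unitary_gaussianInt _
  right_mem _ := pow_mem sqrtd_mem_unitary_gaussianInt _
  autocorrelation_add := by
    unfold periodicAutocorrelation
    decide +kernel

theorem isHadamard_gaussian118 :
    (conjugateDouble (borderedCirculant (-1) legendreLeft58)
      (borderedCirculant Zsqrtd.sqrtd legendreRight58)).IsHadamard := by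
  refine isLegendrePair_legendre58.isHadamard_conjugateDouble
    (Zsqrtd.norm_eq_one_iff_mem_unitary.mp rfl) sqrtd_mem_unitary_gaussianInt ?_ ?_
    (IsRegular.of_ne_zero ?_)
  · rw [sum_legendreLeft58, sum_legendreRight58]
    decide
  · rw [sum_legendreLeft58, sum_legendreRight58]
    decide
  · rw [ZMod.card]
    decide

end Gaussian

/-- There exists a quaternary Hadamard matrix of order 118: a
`118 × 118` complex matrix `H` with all entries in `{-i, -1, 1, i}` satisfying
`HH* = 118·I`. -/
theorem exists_quaternary_hadamard_118 :
    ∃ H : Matrix (Fin 118) (Fin 118) ℂ,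
      (∀ i j, H i j ∈ ({-Complex.I, -1, 1, Complex.I} : Set ℂ)) ∧
      H * Hᴴ = (118 : ℂ) • 1 := by
  have e : (Unit ⊕ ZMod 58) ⊕ (Unit ⊕ ZMod 58) ≃ Fin 118 :=
    Fintype.equivFinOfCardEq (by simp [ZMod.card])
  have hreindex := isHadamard_gaussian118.reindex e e
  have hcomplex := isHadamard_map hreindex GaussianInt.toComplex GaussianInt.toComplex_star
  refine ⟨_, fun i j => ?_, by simpa using hcomplex.mul_conjTranspose⟩
  exact toComplex_mem_of_mem_unitary (hreindex.apply_mem i j)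
end
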